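/- Eventual periodicity of LSB: for every nonempty digit string s, the sequence s, Z(s), Z^2(s), ... is eventually periodic with period at most 9, where for strings with run lengths exceeding 9 the run length n is written out in its decimal digits followed by the digit a (treating max(n,a) = n when n > 9). -/

import Mathlib

/-- Run-length encoding of a digit string. -/
def rle : List ℕ → List (ℕ × ℕ)
  | [] => []
  | a :: t =>
    match rle t with
    | [] => [(a, 1)]
    | (b, n) :: r => if a = b then (b, n + 1) :: r else (a, 1) :: (b, n) :: r

/-- The "look-and-say-the-biggest" map: each maximal run of the digit `a` of length `n`
is replaced by the decimal digits of `max n a` followed by the digit `a`.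
(When `n ≤ 9` this is just the two digits `max n a`, `a`.) -/
def Z (s : List ℕ) : List ℕ :=
  ((rle s).map fun p => (Nat.digits 10 (max p.2 p.1)).reverse ++ [p.1]).flatten

/-- `r` is a run-length representation of the digit string `s`: all run lengths are
positive, consecutive base digits differ, and the expansion of `r` equals `s`. -/
def IsRLE (r : List (ℕ × ℕ)) (s : List ℕ) : Prop :=
  (∀ p ∈ r, 1 ≤ p.2) ∧ (r.map Prod.fst).Chain' (· ≠ ·) ∧
    (r.map fun p => List.replicate p.2 p.1).flatten = s

/-!
A run of length `n` in a digit string contributes about `log₁₀ n` digits to its image, and the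
digits closing two consecutive blocks of the image differ, so a run of the image meets at most one
of these closing digits, together with the written-out numbers on its two sides. Hence the longest
run shrinks until all runs have length at most `3`, and this bound then persists.

From then on a run `aⁿ` becomes the two digits `max n a`, `a` with `n ≤ 3`. So `Z` keeps the last
digit of a string and replaces its first digit `c` by some `max n c` with `n ≤ 3`. A boundary
between digits `b` and `c` can therefore only ever disappear if `b = max n c` for some `n ≤ 3`;
all other boundaries cut the string into factors which evolve independently. A factor without such
cuts is either a single run of a digit `a ≥ 4`, which becomes the fixed point `aa`, or a weakly
decreasing string in the digits `0, 1, 2, 3` with runs of length at most `3`. There are `256` of the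
latter, and each of them has period `2` after at most `6` steps.
-/

open Filter List

section EventuallyPeriodic

variable {α : Type*} {f : α → α} {p N : ℕ} {x : α}

/-- The orbit of `x` under `f` is eventually periodic, with `p` as a (not necessarily minimal)
period. -/
def EventuallyPeriodic (f : α → α) (p : ℕ) (x : α) : Prop :=
  ∀ᶠ n in atTop, f^[n + p] x = f^[n] x

theorem EventuallyPeriodic.of_iterate (h : EventuallyPeriodic f p (f^[N] x)) :
    EventuallyPeriodic f p x := by
  rw [EventuallyPeriodic, ← map_add_atTop_eq_nat N, eventually_map]
  filter_upwards [h] with n hn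
  rwa [← Function.iterate_add_apply, ← Function.iterate_add_apply, add_right_comm] at hn

theorem eventuallyPeriodic_of_iterate_add_eq (h : f^[N + p] x = f^[N] x) :
    EventuallyPeriodic f p x := by
  have hper : Function.IsPeriodicPt f p (f^[N] x) := by
    rwa [Function.IsPeriodicPt, Function.IsFixedPt, ← Function.iterate_add_apply, add_comm]
  refine .of_iterate (N := N) (.of_forall fun n => ?_)
  rw [Function.iterate_add_apply, hper.eq]

end EventuallyPeriodic

section Runs

variable {α : Type*}

theorem exists_cons_eq_replicate_append (a : α) (l : List α) :
    ∃ n t, n ≠ 0 ∧ a :: l = replicate n a ++ t ∧ t.head? ≠ some a := by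
  induction l with
  | nil => exact ⟨1, [], by simp⟩
  | cons b l ih =>
    by_cases hba : b = a
    · obtain ⟨n, t, -, hl, ht⟩ := ih
      exact ⟨n + 1, t, by simp, by simp [replicate_succ, hba, hl], ht⟩
    · exact ⟨1, b :: l, by simp, by simp, by simpa using hba⟩

@[elab_as_elim]
theorem run_induction {P : List α → Prop} (s : List α) (nil : P [])
    (run : ∀ a n t, n ≠ 0 → t.head? ≠ some a → P t → P (replicate n a ++ t)) : P s := by
  induction hlen : s.length using Nat.strong_induction_on generalizing s with
  | _ _ ih =>
    cases s with
    | nil => exact nil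
    | cons a l =>
      obtain ⟨n, t, hn, hs, ht⟩ := exists_cons_eq_replicate_append a l
      rw [hs] at hlen ⊢
      rw [length_append, length_replicate] at hlen
      exact run a n t hn ht (ih t.length (by omega) t rfl)

@[elab_as_elim]
theorem isChain_append_induction {R : α → α → Prop} {P : List α → Prop} (s : List α)
    (chain : ∀ t, List.IsChain R t → P t)
    (append : ∀ u b c v, ¬ R b c → P (u ++ [b]) → P (c :: v) → P (u ++ [b] ++ c :: v)) : P s := by
  induction hlen : s.length using Nat.strong_induction_on generalizing s with
  | _ _ ih =>
    by_cases hs : List.IsChain R s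
    · exact chain s hs
    · rw [isChain_iff_forall_rel_of_append_cons_cons] at hs
      push Not at hs
      obtain ⟨b, c, u, v, rfl, hbc⟩ := hs
      simp only [length_append, length_cons] at hlen
      simpa using append u b c v hbc (ih _ (by simp; omega) _ rfl) (ih _ (by simp; omega) _ rfl)

/-- Every run of equal letters in `s` has length at most `k`; the runs considered are arbitrary
constant factors, not only maximal ones. -/
def RunsLE (k : ℕ) (s : List α) : Prop :=
  ∀ a n, replicate n a <:+: s → n ≤ k

theorem runsLE_length (s : List α) : RunsLE s.length s :=
  fun _ _ h => by simpa using h.length_le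

theorem RunsLE.of_infix {k : ℕ} {s t : List α} (ht : RunsLE k t) (hst : s <:+: t) : RunsLE k s :=
  fun a n h => ht a n (h.trans hst)

theorem RunsLE.append_cons {k m : ℕ} {u x : List α} {a : α} (hx : RunsLE k x)
    (hax : ∀ n, replicate n a <+: x → n ≤ m) (hk : u.length + 1 + m ≤ k) :
    RunsLE k (u ++ a :: x) := by
  intro c n h
  rw [List.append_cons, infix_append_iff] at h
  obtain h | h | ⟨l₁, l₂, hl, hl₁, hl₂⟩ := h
  · have hlen : n ≤ u.length + 1 := by simpa using h.length_le
    omega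
  · exact hx c n h
  · obtain ⟨rfl, hl₁c, hl₂c⟩ := replicate_eq_append_iff.1 hl
    rw [hl₂c] at hl₂
    obtain rfl | hne := eq_or_ne l₁ []
    · simpa using hx c _ hl₂.isInfix
    · have ha : a ∈ l₁ := by
        simpa only [hl₁.getLast hne, getLast_append_singleton] using getLast_mem hne
      have hac : a = c := by
        rw [hl₁c] at ha
        exact eq_of_mem_replicate ha
      have hlen₁ : l₁.length ≤ u.length + 1 := by simpa using hl₁.length_le
      have hlen₂ : l₂.length ≤ m := hax _ (hac ▸ hl₂)
      omega

theorem le_length_of_replicate_prefix_append_cons {n : ℕ} {a c : α} {u x : List α}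
    (h : replicate n c <+: u ++ a :: x) (hac : a ≠ c) : n ≤ u.length := by
  by_contra! hn
  have hget := h.getElem (i := u.length) (by simpa using hn)
  rw [getElem_replicate, getElem_append_right le_rfl] at hget
  exact hac (by simpa using hget.symm)

end Runs

section Sorted

theorem eq_flatMap_replicate_count {m : ℕ} {s : List ℕ} (hs : s.Pairwise (· ≥ ·))
    (hm : ∀ d ∈ s, d < m) :
    s = (range m).reverse.flatMap fun d => replicate (s.count d) d := by
  refine Perm.eq_of_pairwise' (r := (· ≥ ·)) hs ?_ ?_
  · rw [pairwise_flatMap]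
    refine ⟨fun d _ => by simp [pairwise_replicate], ?_⟩
    rw [pairwise_reverse]
    refine pairwise_lt_range.imp fun {c d} hcd x hx y hy => ?_
    rw [eq_of_mem_replicate hx, eq_of_mem_replicate hy]
    exact hcd.le
  · rw [perm_iff_count]
    intro d
    rw [count_flatMap]
    have hsum : count d s = ∑ c ∈ Finset.range m, if c = d then s.count c else 0 := by
      rw [Finset.sum_ite_eq']
      split_ifs with hd
      · rfl
      · exact count_eq_zero_of_not_mem fun h => hd (by simpa using hm d h)
    simp only [hsum, Function.comp_def, count_replicate, map_reverse, sum_reverse, beq_iff_eq]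
    rfl

end Sorted

section RunLengthEncoding

theorem exists_rle_cons (a : ℕ) (t : List ℕ) : ∃ n r, rle (a :: t) = (a, n) :: r := by
  rw [rle]
  split
  · exact ⟨_, _, rfl⟩
  · split_ifs with h
    · exact ⟨_, _, by rw [h]⟩
    · exact ⟨_, _, rfl⟩

theorem rle_append {u v : List ℕ} (h : ∀ b ∈ u.getLast?, b ∉ v.head?) :
    rle (u ++ v) = rle u ++ rle v := by
  induction u with
  | nil => rfl
  | cons a u ih =>
    cases u with
    | nil =>
      cases v with
      | nil => simp [rle]
      | cons c v =>
        obtain ⟨n, r, hr⟩ := exists_rle_cons c v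
        have hac : a ≠ c := by simpa [eq_comm] using h
        rw [singleton_append, rle, hr]
        simp [rle, hac]
    | cons b u =>
      obtain ⟨n, r, hr⟩ := exists_rle_cons b u
      rw [cons_append, rle, rle, ih (by simpa using h), hr, cons_append]
      dsimp only
      split_ifs <;> rfl

theorem rle_replicate {n : ℕ} (hn : n ≠ 0) (a : ℕ) : rle (replicate n a) = [(a, n)] := by
  induction n, Nat.one_le_iff_ne_zero.2 hn using Nat.le_induction with
  | base => simp [rle]
  | succ n hn ih => rw [replicate_succ, rle, ih (by omega)]; simp

end RunLengthEncoding

section LookAndSayTheBiggest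

variable {a n : ℕ} {s t u v : List ℕ}

theorem Z_nil : Z [] = [] := rfl

theorem Z_append (h : ∀ b ∈ u.getLast?, b ∉ v.head?) : Z (u ++ v) = Z u ++ Z v := by
  simp only [Z, rle_append h, map_append, flatten_append]

theorem Z_replicate (hn : n ≠ 0) (a : ℕ) :
    Z (replicate n a) = (Nat.digits 10 (max n a)).reverse ++ [a] := by
  simp [Z, rle_replicate hn]

theorem Z_replicate_append (hn : n ≠ 0) (ht : t.head? ≠ some a) :
    Z (replicate n a ++ t) = (Nat.digits 10 (max n a)).reverse ++ a :: Z t := by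
  rw [Z_append (by simpa [getLast?_replicate, hn] using ht), Z_replicate hn, append_assoc,
    singleton_append]

theorem getLast?_Z (s : List ℕ) : (Z s).getLast? = s.getLast? := by
  induction s using run_induction with
  | nil => rfl
  | run a n t hn ht ih =>
    simp only [Z_replicate_append hn ht, getLast?_append, getLast?_cons, ih, getLast?_replicate,
      if_neg hn]
    cases t.getLast? <;> rfl

theorem forall_mem_Z_le_nine (hs : ∀ d ∈ s, d ≤ 9) : ∀ d ∈ Z s, d ≤ 9 := by
  induction s using run_induction with
  | nil => exact hs
  | run a n t hn ht ih =>
    simp only [mem_append, mem_replicate] at hs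
    simp only [Z_replicate_append hn ht, mem_append, mem_reverse, mem_cons]
    rintro d (hd | rfl | hd)
    · exact Nat.le_of_lt_succ (Nat.digits_lt_base (by norm_num) hd)
    · exact hs d (.inl ⟨hn, rfl⟩)
    · exact ih (fun e he => hs e (.inr he)) d hd

theorem length_digits_max_le {D : ℕ} (hn : n < 10 ^ D) (ha : a < 10 ^ D) :
    (Nat.digits 10 (max n a)).reverse.length ≤ D := by
  rw [length_reverse, Nat.digits_length_le_iff (by norm_num)]
  exact max_lt hn ha

theorem RunsLE.le_of_replicate_prefix_Z {k D : ℕ} (hruns : RunsLE k s)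
    (hs : ∀ d ∈ s, d < 10 ^ D) (hk : k < 10 ^ D) (ha : s.head? ≠ some a)
    (h : replicate n a <+: Z s) : n ≤ D := by
  cases s with
  | nil => simp_all [Z_nil]
  | cons b l =>
    obtain ⟨m, t, hm, hl, ht⟩ := exists_cons_eq_replicate_append b l
    have hba : b ≠ a := by simpa using ha
    rw [hl] at hruns h
    rw [Z_replicate_append hm ht] at h
    have hmk : m ≤ k := hruns b m (prefix_append _ _).isInfix
    exact (le_length_of_replicate_prefix_append_cons h hba).trans
      (length_digits_max_le (hmk.trans_lt hk) (hs b mem_cons_self))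

protected theorem RunsLE.Z {k D : ℕ} (hruns : RunsLE k s) (hs : ∀ d ∈ s, d < 10 ^ D)
    (hk : k < 10 ^ D) : RunsLE (2 * D + 1) (Z s) := by
  induction s using run_induction with
  | nil => exact fun a n h => by simp_all [Z_nil]
  | run a n t hn ht ih =>
    have hnk : n ≤ k := hruns a n (prefix_append _ _).isInfix
    have hat : a < 10 ^ D := hs a (by simp [hn])
    have hts : ∀ d ∈ t, d < 10 ^ D := fun d hd => hs d (mem_append_right _ hd)
    have htruns : RunsLE k t := hruns.of_infix (suffix_append _ _).isInfix
    have hlen := length_digits_max_le (hnk.trans_lt hk) hat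
    rw [Z_replicate_append hn ht]
    exact (ih htruns hts).append_cons
      (fun _ => htruns.le_of_replicate_prefix_Z hts hk ht) (by omega)

end LookAndSayTheBiggest

section Tame

variable {s t : List ℕ}

/-- A decimal digit string whose runs all have length at most `3`. These strings are stable under
`Z`, and every orbit of `Z` reaches one. -/
structure IsTame (s : List ℕ) : Prop where
  le_nine : ∀ d ∈ s, d ≤ 9
  runsLE : RunsLE 3 s

theorem IsTame.of_infix (ht : IsTame t) (hst : s <:+: t) : IsTame s :=
  ⟨fun d hd => ht.le_nine d (hst.subset hd), ht.runsLE.of_infix hst⟩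

theorem RunsLE.isTame_Z {k : ℕ} (hruns : RunsLE k s) (hs : ∀ d ∈ s, d ≤ 9) (hk : k ≤ 9) :
    IsTame (Z s) :=
  ⟨forall_mem_Z_le_nine hs,
    hruns.Z (D := 1) (fun d hd => (hs d hd).trans_lt (by norm_num)) (by omega)⟩

protected theorem IsTame.Z (hs : IsTame s) : IsTame (Z s) :=
  hs.runsLE.isTame_Z hs.le_nine (by norm_num)

theorem two_mul_log_add_three_lt {k : ℕ} (hk : 10 ≤ k) : 2 * Nat.log 10 k + 3 < k := by
  have hlog : 1 ≤ Nat.log 10 k := Nat.log_pos (by norm_num) hk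
  calc 2 * Nat.log 10 k + 3 < 1 + Nat.log 10 k * 9 := by omega
    _ ≤ (1 + 9) ^ Nat.log 10 k := one_add_mul_le_pow_of_sq_nonneg zero_le zero_le zero_le _
    _ ≤ k := Nat.pow_log_le_self 10 (by omega)

theorem RunsLE.exists_isTame_iterate_Z {k : ℕ} (hruns : RunsLE k s) (hs : ∀ d ∈ s, d ≤ 9) :
    ∃ N, IsTame (Z^[N] s) := by
  induction k using Nat.strong_induction_on generalizing s with
  | _ k ih =>
    by_cases hk : k ≤ 9
    · exact ⟨1, hruns.isTame_Z hs hk⟩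
    · have hlog := two_mul_log_add_three_lt (show 10 ≤ k by omega)
      have hklt : k < 10 ^ (Nat.log 10 k + 1) := Nat.lt_pow_succ_log_self (by norm_num) k
      obtain ⟨N, hN⟩ := ih _ (by omega)
        (hruns.Z (fun d hd => (hs d hd).trans_lt (by omega)) hklt) (forall_mem_Z_le_nine hs)
      exact ⟨N + 1, hN⟩

end Tame

section Factorization

variable {s t u v : List ℕ} {b c d : ℕ}

/-- The boundary between adjacent digits `b` and `c` may disappear at some point of the evolution
of a tame string: the first digit `c` of the factor to its right may turn into `b`. -/
def MayMerge (b c : ℕ) : Prop :=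
  ∃ n ≤ 3, b = max n c

theorem MayMerge.refl (b : ℕ) : MayMerge b b := ⟨0, by simp⟩

theorem MayMerge.trans (hbc : MayMerge b c) (hcd : MayMerge c d) : MayMerge b d := by
  obtain ⟨m, hm, rfl⟩ := hbc
  obtain ⟨n, hn, rfl⟩ := hcd
  exact ⟨max m n, max_le hm hn, (max_assoc m n d).symm⟩

theorem MayMerge.ge (h : MayMerge b c) : b ≥ c := by
  obtain ⟨n, -, rfl⟩ := h
  exact le_max_right n c

theorem MayMerge.eq_of_three_lt (h : MayMerge b c) (hb : 3 < b) : c = b := by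
  obtain ⟨n, hn, rfl⟩ := h
  omega

instance : Trans MayMerge MayMerge MayMerge := ⟨MayMerge.trans⟩

theorem Z_replicate_append_of_isTame {a n : ℕ} (hs : IsTame (replicate n a ++ t)) (hn : n ≠ 0)
    (ht : t.head? ≠ some a) : Z (replicate n a ++ t) = max n a :: a :: Z t := by
  have hn3 : n ≤ 3 := hs.runsLE a n (prefix_append _ _).isInfix
  have ha9 : a ≤ 9 := hs.le_nine a (by simp [hn])
  rw [Z_replicate_append hn ht, Nat.digits_of_lt 10 _ (by omega) (by omega)]
  rfl

theorem IsTame.exists_head?_Z (hs : IsTame (c :: s)) :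
    ∃ n ≤ 3, (Z (c :: s)).head? = some (max n c) := by
  obtain ⟨n, t, hn, hl, ht⟩ := exists_cons_eq_replicate_append c s
  rw [hl] at hs ⊢
  rw [Z_replicate_append_of_isTame hs hn ht]
  exact ⟨n, hs.runsLE c n (prefix_append _ _).isInfix, rfl⟩

theorem iterate_Z_append (hv : IsTame v) (hub : u.getLast? = some b) (hvc : v.head? = some c)
    (hbc : ¬ MayMerge b c) (n : ℕ) : Z^[n] (u ++ v) = Z^[n] u ++ Z^[n] v := by
  induction n generalizing u v c with
  | zero => rfl
  | succ n ih =>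
    have hne : c ≠ b := fun h => hbc (h ▸ .refl b)
    obtain ⟨l, rfl⟩ := head?_eq_some_iff.1 hvc
    obtain ⟨m, hm, hhead⟩ := hv.exists_head?_Z
    have hmerge : ¬ MayMerge b (max m c) := fun h => hbc (h.trans ⟨m, hm, rfl⟩)
    simp only [Function.iterate_succ_apply]
    rw [Z_append (by simpa [hub] using hne),
      ih hv.Z ((getLast?_Z u).trans hub) hhead hmerge]

theorem EventuallyPeriodic.append {p : ℕ} (hu : EventuallyPeriodic Z p u)
    (hv : EventuallyPeriodic Z p v) (htame : IsTame v) (hub : u.getLast? = some b)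
    (hvc : v.head? = some c) (hbc : ¬ MayMerge b c) : EventuallyPeriodic Z p (u ++ v) := by
  filter_upwards [hu, hv] with n hun hvn
  simp only [iterate_Z_append htame hub hvc hbc, hun, hvn]

end Factorization

section Factors

variable {s : List ℕ} {a n : ℕ}

theorem Z_replicate_of_isTame (htame : IsTame (replicate n a)) (hn : n ≠ 0) (ha : 3 ≤ a) :
    Z (replicate n a) = replicate 2 a := by
  have hn3 : n ≤ 3 := htame.runsLE a n infix_rfl
  have hZ := Z_replicate_append_of_isTame (t := []) (by simpa using htame) hn (by simp)
  rwa [append_nil, max_eq_right (hn3.trans ha)] at hZ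

theorem eventuallyPeriodic_replicate (htame : IsTame (replicate n a)) (hn : n ≠ 0) (ha : 3 ≤ a)
    (p : ℕ) : EventuallyPeriodic Z p (replicate n a) := by
  have hstep : Z (replicate n a) = replicate 2 a := Z_replicate_of_isTame htame hn ha
  have hfix : Function.IsFixedPt Z (replicate 2 a) :=
    Z_replicate_of_isTame (hstep ▸ htame.Z) two_ne_zero ha
  refine eventuallyPeriodic_of_iterate_add_eq (N := 1) ?_
  rw [add_comm, Function.iterate_add_apply, Function.iterate_one, hstep, hfix.iterate p]

theorem iterate_Z_eight_eq_iterate_Z_six : ∀ i ≤ 3, ∀ j ≤ 3, ∀ k ≤ 3, ∀ l ≤ 3,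
    let w := replicate i 3 ++ replicate j 2 ++ replicate k 1 ++ replicate l 0
    Z^[6 + 2] w = Z^[6] w := by
  decide +kernel

theorem eventuallyPeriodic_of_pairwise_ge (hs : s.Pairwise (· ≥ ·)) (h3 : ∀ d ∈ s, d ≤ 3)
    (hruns : RunsLE 3 s) : EventuallyPeriodic Z 2 s := by
  have hsplit := eq_flatMap_replicate_count hs fun d hd => Nat.lt_succ_of_le (h3 d hd)
  have hcount : ∀ d ≤ 3, s.count d ≤ 3 := by
    intro d hd
    have hmem : d ∈ (range 4).reverse := by simpa using Nat.lt_succ_of_le hd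
    have hinfix := infix_flatMap_of_mem hmem fun d => replicate (s.count d) d
    rw [← hsplit] at hinfix
    exact hruns d _ hinfix
  have hw : s = replicate (s.count 3) 3 ++ replicate (s.count 2) 2 ++ replicate (s.count 1) 1 ++
      replicate (s.count 0) 0 := by
    simpa [range_succ] using hsplit
  rw [hw]
  exact eventuallyPeriodic_of_iterate_add_eq (iterate_Z_eight_eq_iterate_Z_six _
    (hcount 3 (by norm_num)) _ (hcount 2 (by norm_num)) _ (hcount 1 (by norm_num)) _
    (hcount 0 (by norm_num)))

theorem eventuallyPeriodic_of_isChain_mayMerge (htame : IsTame s) (hs : s.IsChain MayMerge) :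
    EventuallyPeriodic Z 2 s := by
  cases s with
  | nil => exact .of_forall fun n => by simp [Function.iterate_fixed Z_nil]
  | cons a l =>
    rw [isChain_iff_pairwise] at hs
    have hmem : ∀ d ∈ a :: l, MayMerge a d :=
      forall_mem_cons.2 ⟨.refl a, (pairwise_cons.1 hs).1⟩
    by_cases ha : a ≤ 3
    · refine eventuallyPeriodic_of_pairwise_ge (hs.imp MayMerge.ge) ?_ htame.runsLE
      exact fun d hd => (hmem d hd).ge.trans ha
    · have hconst : a :: l = replicate (l.length + 1) a :=
        eq_replicate_iff.2 ⟨rfl, fun d hd => (hmem d hd).eq_of_three_lt (by omega)⟩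
      rw [hconst] at htame ⊢
      exact eventuallyPeriodic_replicate htame (by simp) (by omega) 2

theorem IsTame.eventuallyPeriodic (hs : IsTame s) : EventuallyPeriodic Z 2 s := by
  induction s using isChain_append_induction (R := MayMerge) with
  | chain t ht => exact eventuallyPeriodic_of_isChain_mayMerge hs ht
  | append u b c v hbc hu hv =>
    have hcv : IsTame (c :: v) := hs.of_infix (suffix_append _ _).isInfix
    exact (hu (hs.of_infix (prefix_append _ _).isInfix)).append (hv hcv) hcv (by simp) rfl hbc

end Factors

theorem LSB_eventually_periodic_general (s : List ℕ) (hdig : ∀ d ∈ s, d ≤ 9) :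
    ∃ N, ∀ n ≥ N, Z^[n + 2] s = Z^[n] s := by
  obtain ⟨N, hN⟩ := (runsLE_length s).exists_isTame_iterate_Z hdig
  exact eventually_atTop.1 hN.eventuallyPeriodic.of_iterate

/-- Eventual periodicity of LSB: for every nonempty digit string `s`, the sequence
`s, Z(s), Z²(s), …` is eventually periodic with period at most 9. -/
theorem LSB_eventually_periodic (s : List ℕ) (hs : s ≠ []) (hdig : ∀ d ∈ s, d ≤ 9) :
    ∃ N, ∃ τ, 1 ≤ τ ∧ τ ≤ 9 ∧ ∀ n ≥ N, Z^[n + τ] s = Z^[n] s := by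
  obtain ⟨N, hN⟩ := LSB_eventually_periodic_general s hdig
  exact ⟨N, 2, by norm_num, by norm_num, hN⟩
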